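/- Let a and b be positive semidefinite n×n complex matrices and let 1 < p < ∞ with conjugate exponent p′ = p/(p−1). Then Re Tr(a · b^{p−1}) ≤ (1/p) · Tr(a^p) + (1/p′) · Tr(b^p). (This Young-type trace inequality is established in the proof of the paper's Lemma 2.4 via the Hölder and Young inequalities.) -/

import Mathlib

open Matrix
open scoped ComplexOrder

/-- The fractional power `a^r` of a matrix, defined via the continuous functional
calculus (equivalently, via the spectral decomposition for Hermitian matrices). -/
noncomputable def matRpow {n : ℕ} (a : Matrix (Fin n) (Fin n) ℂ) (r : ℝ) :
    Matrix (Fin n) (Fin n) ℂ :=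
  cfc (fun x : ℝ => x ^ r) a

/-- The trace of a product of functions of two Hermitian matrices, in terms of their eigenvalues and
the squared moduli of the overlaps of their eigenvectors. -/
theorem trace_cfc_mul_cfc {n : ℕ} {a b : Matrix (Fin n) (Fin n) ℂ}
    (ha : a.IsHermitian) (hb : b.IsHermitian) (f g : ℝ → ℝ) :
    (cfc f a * cfc g b).trace.re
      = ∑ i, ∑ j, f (ha.eigenvalues i) * g (hb.eigenvalues j) *
          Complex.normSq ((star (ha.eigenvectorUnitary : Matrix (Fin n) (Fin n) ℂ) *
            (hb.eigenvectorUnitary : Matrix (Fin n) (Fin n) ℂ)) i j) := by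
  rw [ha.cfc_eq, hb.cfc_eq, IsHermitian.cfc, IsHermitian.cfc, Unitary.conjStarAlgAut_apply,
    Unitary.conjStarAlgAut_apply]
  set U := (ha.eigenvectorUnitary : Matrix (Fin n) (Fin n) ℂ)
  set V := (hb.eigenvectorUnitary : Matrix (Fin n) (Fin n) ℂ)
  set D := diagonal (RCLike.ofReal ∘ f ∘ ha.eigenvalues : Fin n → ℂ) with hD
  set E := diagonal (RCLike.ofReal ∘ g ∘ hb.eigenvalues : Fin n → ℂ) with hE
  have h : (U * D * star U * (V * E * star V)).trace
      = (D * (star U * V) * (E * star (star U * V))).trace := by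
    rw [star_mul, star_star, mul_assoc U, mul_assoc U, trace_mul_comm U]
    simp only [mul_assoc]
  rw [h, trace, Complex.re_sum]
  refine Finset.sum_congr rfl fun i _ => ?_
  rw [diag_apply, mul_apply, Complex.re_sum]
  refine Finset.sum_congr rfl fun j _ => ?_
  rw [hD, hE, diagonal_mul, diagonal_mul, star_apply]
  generalize (star U * V) i j = w
  simp [Complex.normSq_apply]
  ring

/-- A pointwise bound `f₁ x * g₁ y ≤ f₂ x + g₂ y` on the eigenvalues of two Hermitian matrices gives
the corresponding trace inequality. -/
theorem trace_cfc_mul_cfc_le_add {n : ℕ} {a b : Matrix (Fin n) (Fin n) ℂ}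
    (ha : a.IsHermitian) (hb : b.IsHermitian) {f₁ g₁ f₂ g₂ : ℝ → ℝ} {s t : ℝ}
    (h : ∀ i j, f₁ (ha.eigenvalues i) * g₁ (hb.eigenvalues j)
      ≤ s * f₂ (ha.eigenvalues i) + t * g₂ (hb.eigenvalues j)) :
    (cfc f₁ a * cfc g₁ b).trace.re
      ≤ s * (cfc f₂ a).trace.re + t * (cfc g₂ b).trace.re := by
  have h₁ := trace_cfc_mul_cfc ha hb f₂ fun _ => 1
  have h₂ := trace_cfc_mul_cfc ha hb (fun _ => 1) g₂
  rw [cfc_const_one ℝ b hb.isSelfAdjoint, mul_one] at h₁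
  rw [cfc_const_one ℝ a ha.isSelfAdjoint, one_mul] at h₂
  rw [trace_cfc_mul_cfc ha hb, h₁, h₂, Finset.mul_sum, Finset.mul_sum, ← Finset.sum_add_distrib]
  refine Finset.sum_le_sum fun i _ => ?_
  rw [Finset.mul_sum, Finset.mul_sum, ← Finset.sum_add_distrib]
  refine Finset.sum_le_sum fun j _ => ?_
  refine (mul_le_mul_of_nonneg_right (h i j) (Complex.normSq_nonneg _)).trans_eq ?_
  ring

/-- Young-type trace inequality from the proof of Lemma 2.4: for positive
semidefinite `a, b` and `1 < p < ∞` with conjugate exponent `p′ = p/(p−1)`,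
`Re Tr(a b^{p−1}) ≤ (1/p) Tr(a^p) + (1/p′) Tr(b^p)`. -/
theorem trace_young {n : ℕ} (a b : Matrix (Fin n) (Fin n) ℂ)
    (ha : a.PosSemidef) (hb : b.PosSemidef)
    (p : ℝ) (hp : 1 < p) :
    ((a * matRpow b (p - 1)).trace).re
      ≤ (1 / p) * ((matRpow a p).trace).re
        + (1 / (p / (p - 1))) * ((matRpow b p).trace).re := by
  have key := trace_cfc_mul_cfc_le_add ha.isHermitian hb.isHermitian (f₁ := fun x => x)
    (g₁ := fun x => x ^ (p - 1)) (f₂ := fun x => x ^ p) (g₂ := fun x => x ^ p) (s := 1 / p)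
    (t := 1 / (p / (p - 1))) fun i j => by
      have hy := hb.eigenvalues_nonneg j
      have young := Real.young_inequality_of_nonneg (ha.eigenvalues_nonneg i)
        (Real.rpow_nonneg hy (p - 1)) (Real.HolderConjugate.conjExponent hp)
      rw [Real.conjExponent, ← Real.rpow_mul hy,
        mul_div_cancel₀ p (sub_pos.mpr hp).ne'] at young
      exact young.trans_eq (by ring)
  rwa [cfc_id' ℝ a ha.isHermitian.isSelfAdjoint] at key
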